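/- arXiv:2404.04822 — 3 statements merged into one kernel-verified Lean document; each statement's English description precedes it below -/
import Mathlib

section
/- On the responsive domain ℛ, the generalized Top Trading Cycles rule TTC satisfies truncation-proofness (TP): for every responsive profile P, every agent i, and every truncation strategy P'_i ∈ ℛ_i for P_i, TTC_i(P) R_i TTC_i(P'_i, P_{-i}). -/
attribute [local instance] Classical.propDecidable

namespace Realloc

/-- A strict preference over bundles: a strict total order on `Finset O`. -/
structure Pref (O : Type) : Type where
  strict : Finset O → Finset O → Prop
  total : ∀ X Y : Finset O, strict X Y ∨ X = Y ∨ strict Y X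
  irrefl : ∀ X : Finset O, ¬ strict X X
  trans : ∀ X Y Z : Finset O, strict X Y → strict Y Z → strict X Z

/-- The weak ("at least as good as") relation associated with a strict preference. -/
def Pref.weak {O : Type} (p : Pref O) (X Y : Finset O) : Prop :=
  p.strict X Y ∨ X = Y

/-- An allocation: nonempty pairwise disjoint bundles whose union is all of `O`. -/
structure Allocation (N O : Type) : Type where
  bundle : N → Finset O
  nonempty : ∀ i : N, (bundle i).Nonempty
  disj : ∀ i j : N, i ≠ j → ∀ o : O, o ∈ bundle i → o ∉ bundle j
  cover : ∀ o : O, ∃ i : N, o ∈ bundle i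

variable {N O : Type}

/-- Two preferences induce the same marginal (singleton) ranking over objects. -/
def MargEq (p q : Pref O) : Prop :=
  ∀ x y : O, p.strict {x} {y} ↔ q.strict {x} {y}

/-- Responsive preferences. -/
def Responsive [DecidableEq O] (p : Pref O) : Prop :=
  ∀ (X : Finset O) (y z : O), y ∉ X → z ∉ X →
    (p.strict (insert y X) (insert z X) ↔ p.strict {y} {z})

/-- Lexicographic preferences: `X` is preferred to `Y` iff the best object of the
symmetric difference belongs to `X`. -/
def Lexicographic [DecidableEq O] (p : Pref O) : Prop :=
  ∀ X Y : Finset O, X ≠ Y →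
    (p.strict X Y ↔
      ∃ x ∈ X \ Y, ∀ y ∈ (X \ Y) ∪ (Y \ X), y ≠ x → p.strict {x} {y})

/-- Conditionally lexicographic preferences. -/
def CondLex [DecidableEq O] (p : Pref O) : Prop :=
  ∀ X Y : Finset O, Disjoint X Y → X.Nonempty →
    ∃! x : O, x ∈ X ∧ ∀ Z : Finset O, Z ⊆ X.erase x → p.strict (insert x Y) (Y ∪ Z)

/-- Monotonic preferences. -/
def Monot (p : Pref O) : Prop :=
  ∀ X Y : Finset O, Y ⊆ X → p.weak X Y

/-- `p'` is a subset-drop strategy for `p` (relative to endowment `ωi`):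
some set `X ⊆ O ∖ ωi` is moved to the bottom of the marginal ranking, preserving
the relative marginal order within `X` and within its complement. -/
def SubsetDropStrategy (ωi : Finset O) (p p' : Pref O) : Prop :=
  ∃ X : Set O, (∀ x ∈ X, x ∉ ωi) ∧
    (∀ x ∈ X, ∀ y ∈ X, (p.strict {x} {y} ↔ p'.strict {x} {y})) ∧
    (∀ x ∉ X, ∀ y ∉ X, (p.strict {x} {y} ↔ p'.strict {x} {y})) ∧
    (∀ x ∈ X, ∀ y ∉ X, p'.strict {y} {x})

/-- `p'` is a drop strategy for `p`: a single object `x ∉ ωi` is moved to the bottom. -/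
def DropStrategy (ωi : Finset O) (p p' : Pref O) : Prop :=
  ∃ x : O, x ∉ ωi ∧
    (∀ u v : O, u ≠ x → v ≠ x → (p.strict {u} {v} ↔ p'.strict {u} {v})) ∧
    (∀ y : O, y ≠ x → p'.strict {y} {x})

/-- `p'` is a truncation strategy for `p`: the tail set
`{o ∈ O ∖ ωi : {x} R {o}}` (for some object `x`) is moved to the bottom. -/
def TruncationStrategy (ωi : Finset O) (p p' : Pref O) : Prop :=
  ∃ x : O,
    (∀ u v : O, (u ∉ ωi ∧ p.weak {x} {u}) → (v ∉ ωi ∧ p.weak {x} {v}) →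
      (p.strict {u} {v} ↔ p'.strict {u} {v})) ∧
    (∀ u v : O, ¬(u ∉ ωi ∧ p.weak {x} {u}) → ¬(v ∉ ωi ∧ p.weak {x} {v}) →
      (p.strict {u} {v} ↔ p'.strict {u} {v})) ∧
    (∀ u v : O, (u ∉ ωi ∧ p.weak {x} {u}) → ¬(v ∉ ωi ∧ p.weak {x} {v}) →
      p'.strict {v} {u})

/-- There is a Pareto-improving trading cycle at the assignment `μ`:
a cyclic sequence of `k+1 ≥ 1` distinct objects and distinct agents, each object owned
(at `μ`) by its agent, such that every agent on the cycle strictly gains by swapping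
the object she relinquishes for the object she points to. -/
def ParetoImprovingCycleAt [DecidableEq O] (pref : N → Pref O) (μ : N → Finset O) : Prop :=
  ∃ (k : ℕ) (obj : Fin (k + 1) → O) (ag : Fin (k + 1) → N),
    Function.Injective obj ∧ Function.Injective ag ∧
    (∀ ℓ : Fin (k + 1), obj ℓ ∈ μ (ag ℓ)) ∧
    (∀ ℓ : Fin (k + 1),
      (pref (ag ℓ)).strict ((insert (obj (ℓ + 1)) (μ (ag ℓ))).erase (obj ℓ)) (μ (ag ℓ)))

/-- Individual-good efficiency of an assignment at a profile. -/
def IGEat [DecidableEq O] (pref : N → Pref O) (μ : N → Finset O) : Prop :=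
  ¬ ParetoImprovingCycleAt pref μ

/-- `ν` Pareto dominates `μ` at the profile `pref`. -/
def ParetoDominates (pref : N → Pref O) (ν μ : N → Finset O) : Prop :=
  (∀ i, (pref i).weak (ν i) (μ i)) ∧ ∃ j, (pref j).strict (ν j) (μ j)

/-- Pareto efficiency of an assignment at a profile. -/
def ParetoEffAt (pref : N → Pref O) (μ : N → Finset O) : Prop :=
  ∀ ν : Allocation N O, ¬ ParetoDominates pref ν.bundle μ

/-- The marginally most-preferred object of a (nonempty) finite set of objects. -/
noncomputable def Pref.best [Nonempty O] (p : Pref O) (S : Finset O) : O :=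
  if h : ∃ x : O, x ∈ S ∧ ∀ y ∈ S, p.weak {x} {y} then h.choose
  else Classical.arbitrary O

/-- The conditionally most-preferred object of `S` given the already-held bundle `Y`. -/
noncomputable def Pref.cbest [Nonempty O] [DecidableEq O] (p : Pref O) (S Y : Finset O) : O :=
  if h : ∃ x : O, x ∈ S ∧ ∀ Z : Finset O, Z ⊆ S.erase x → p.strict (insert x Y) (Y ∪ Z)
  then h.choose else Classical.arbitrary O

/-- The initial owner of an object. -/
noncomputable def Allocation.owner (ω : Allocation N O) (o : O) : N :=
  (ω.cover o).choose

/-- One pass of the generalized TTC algorithm, with fuel.  At each step every agent points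
to her marginally best remaining object and every remaining object points to its owner;
the objects lying on cycles of this functional graph (the periodic points of `g`) are
traded: the owner of a cycling object receives the object she points to. -/
noncomputable def TTCaux [Nonempty O] [DecidableEq O] (pref : N → Pref O) (own : O → N) :
    ℕ → Finset O → N → Finset O
  | 0, _, _ => ∅
  | fuel + 1, S, i =>
      let g : O → O := fun o => (pref (own o)).best S
      let C : Finset O := S.filter fun o => ∃ k : ℕ, 0 < k ∧ g^[k] o = o
      if S.Nonempty then
        ((C.filter fun o => own o = i).image g) ∪ TTCaux pref own fuel (S \ C) i
      else ∅

/-- The generalized Top Trading Cycles rule: the bundle received by agent `i`. -/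
noncomputable def TTC [Fintype O] [Nonempty O] [DecidableEq O]
    (pref : N → Pref O) (ω : Allocation N O) (i : N) : Finset O :=
  TTCaux pref ω.owner (Fintype.card O + 1) Finset.univ i

/-- One pass of the Augmented TTC algorithm, with fuel: agents point to their
conditionally most-preferred remaining object given the bundle assigned so far. -/
noncomputable def ATTCaux [Nonempty O] [DecidableEq O] (pref : N → Pref O) (own : O → N) :
    ℕ → Finset O → (N → Finset O) → N → Finset O
  | 0, _, μ => μ
  | fuel + 1, S, μ =>
      let g : O → O := fun o => (pref (own o)).cbest S (μ (own o))
      let C : Finset O := S.filter fun o => ∃ k : ℕ, 0 < k ∧ g^[k] o = o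
      if S.Nonempty then
        ATTCaux pref own fuel (S \ C) (fun j => μ j ∪ ((C.filter fun o => own o = j).image g))
      else μ

/-- The Augmented Top Trading Cycles rule: the bundle received by agent `i`. -/
noncomputable def ATTC [Fintype O] [Nonempty O] [DecidableEq O]
    (pref : N → Pref O) (ω : Allocation N O) (i : N) : Finset O :=
  ATTCaux pref ω.owner (Fintype.card O + 1) Finset.univ (fun _ => ∅) i

/-- Conditional marginal preference of `p` given the bundle `Y`:
`x` is conditionally better than `y`. -/
def CMarg [DecidableEq O] (p : Pref O) (Y : Finset O) (x y : O) : Prop :=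
  p.strict ((insert x Y).erase y) ((insert y Y).erase x)

/-- Weak conditional marginal preference. -/
def CMargWeak [DecidableEq O] (p : Pref O) (Y : Finset O) (x y : O) : Prop :=
  CMarg p Y x y ∨ x = y

/-- Drop strategy on the conditionally lexicographic domain: `x ∉ ωi` becomes the worst,
with preferences over bundles avoiding `x` unchanged. -/
def DropStrategyCL (ωi : Finset O) (p p' : Pref O) : Prop :=
  ∃ x : O, x ∉ ωi ∧
    (∀ Y : Finset O, Y.Nonempty → x ∉ Y → p'.strict Y {x}) ∧
    (∀ Y Z : Finset O, x ∉ Y → x ∉ Z → (p'.strict Y Z ↔ p.strict Y Z))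

section Rules

variable [DecidableEq O]

/-- Balancedness of a rule on the domain `D`. -/
def RBAL (D : Pref O → Prop) (ω : Allocation N O)
    (φ : (N → Pref O) → Allocation N O) : Prop :=
  ∀ P : N → Pref O, (∀ i, D (P i)) → ∀ i, ((φ P).bundle i).card = (ω.bundle i).card

/-- Individual-good efficiency of a rule on the domain `D`. -/
def RIGE (D : Pref O → Prop) (φ : (N → Pref O) → Allocation N O) : Prop :=
  ∀ P : N → Pref O, (∀ i, D (P i)) → IGEat P ((φ P).bundle)

/-- Pareto efficiency of a rule on the domain `D`. -/
def RPE (D : Pref O → Prop) (φ : (N → Pref O) → Allocation N O) : Prop :=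
  ∀ P : N → Pref O, (∀ i, D (P i)) → ParetoEffAt P ((φ P).bundle)

/-- Individual rationality of a rule on the domain `D`. -/
def RIR (D : Pref O → Prop) (ω : Allocation N O)
    (φ : (N → Pref O) → Allocation N O) : Prop :=
  ∀ P : N → Pref O, (∀ i, D (P i)) → ∀ i, (P i).weak ((φ P).bundle i) (ω.bundle i)

/-- The worst-endowment lower bound of a rule on the domain `D`: no agent receives an
object marginally worse than the marginally worst object of her endowment. -/
def RWELB (D : Pref O → Prop) (ω : Allocation N O)
    (φ : (N → Pref O) → Allocation N O) : Prop :=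
  ∀ P : N → Pref O, (∀ i, D (P i)) → ∀ i, ∀ o ∈ (φ P).bundle i,
    ∀ w ∈ ω.bundle i, (∀ y ∈ ω.bundle i, (P i).weak {y} {w}) → (P i).weak {o} {w}

/-- Marginality of a rule on the domain `D`. -/
def RMAR (D : Pref O → Prop) (φ : (N → Pref O) → Allocation N O) : Prop :=
  ∀ P P' : N → Pref O, (∀ i, D (P i)) → (∀ i, D (P' i)) →
    (∀ i, MargEq (P i) (P' i)) → ∀ i, (φ P).bundle i = (φ P').bundle i

variable [DecidableEq N]

/-- Truncation-proofness of a rule on the domain `D`. -/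
def RTP (D : Pref O → Prop) (ω : Allocation N O)
    (φ : (N → Pref O) → Allocation N O) : Prop :=
  ∀ P : N → Pref O, (∀ i, D (P i)) → ∀ i : N, ∀ p' : Pref O, D p' →
    TruncationStrategy (ω.bundle i) (P i) p' →
    (P i).weak ((φ P).bundle i) ((φ (Function.update P i p')).bundle i)

/-- Drop strategy-proofness of a rule on the domain `D`. -/
def RDSP (D : Pref O → Prop) (ω : Allocation N O)
    (φ : (N → Pref O) → Allocation N O) : Prop :=
  ∀ P : N → Pref O, (∀ i, D (P i)) → ∀ i : N, ∀ p' : Pref O, D p' →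
    DropStrategy (ω.bundle i) (P i) p' →
    (P i).weak ((φ P).bundle i) ((φ (Function.update P i p')).bundle i)

/-- Subset-drop strategy-proofness of a rule on the domain `D`. -/
def RSDSP (D : Pref O → Prop) (ω : Allocation N O)
    (φ : (N → Pref O) → Allocation N O) : Prop :=
  ∀ P : N → Pref O, (∀ i, D (P i)) → ∀ i : N, ∀ p' : Pref O, D p' →
    SubsetDropStrategy (ω.bundle i) (P i) p' →
    (P i).weak ((φ P).bundle i) ((φ (Function.update P i p')).bundle i)

/-- Worst-endowment lower bound on the conditionally lexicographic domain, formulated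
with conditional marginal preferences. -/
def RWELBCL (D : Pref O → Prop) (ω : Allocation N O)
    (φ : (N → Pref O) → Allocation N O) : Prop :=
  ∀ P : N → Pref O, (∀ i, D (P i)) → ∀ i, ∀ o ∈ (φ P).bundle i,
    ∀ w ∈ ω.bundle i,
      (∀ y ∈ ω.bundle i, CMargWeak (P i) ((φ P).bundle i) y w) →
      CMargWeak (P i) ((φ P).bundle i) o w

/-- Drop strategy-proofness on the conditionally lexicographic domain. -/
def RDSPCL (D : Pref O → Prop) (ω : Allocation N O)
    (φ : (N → Pref O) → Allocation N O) : Prop :=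
  ∀ P : N → Pref O, (∀ i, D (P i)) → ∀ i : N, ∀ p' : Pref O, D p' →
    DropStrategyCL (ω.bundle i) (P i) p' →
    (P i).weak ((φ P).bundle i) ((φ (Function.update P i p')).bundle i)

end Rules

/-- Agent `i`'s opportunity set under TTC when reporting `p`: the set of bundles
she may receive as others' (responsive) reports vary. -/
def Opp [Fintype O] [Nonempty O] [DecidableEq O] (ω : Allocation N O) (i : N)
    (p : Pref O) : Set (Finset O) :=
  {A | ∃ Q : N → Pref O, (∀ j, Responsive (Q j)) ∧ Q i = p ∧ TTC Q ω i = A}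

/-! Every round of TTC gives an agent, in exchange for each endowed object that lies on a trading
cycle, an object she marginally likes at least as much. Hence her bundle is the image of her
endowment under a bijection that improves each object, and responsiveness turns such a bijection
into a preference between bundles.

Let `x` be the truncation point. While some object better than `x` remains, the true and the
truncated preference have the same best remaining object, so both runs execute the same trades.
Afterwards the truncated preference ranks what is left of the endowment above all other remaining
objects, so the agent merely keeps it, whereas the true preference gives her an improving image
of it. -/

namespace Pref

variable {p : Pref O} {X Y Z : Finset O}

theorem not_strict_iff_weak : ¬ p.strict X Y ↔ p.weak Y X := by
  constructor
  · intro h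
    rcases p.total X Y with hXY | hXY | hYX
    · exact absurd hXY h
    · exact Or.inr hXY.symm
    · exact Or.inl hYX
  · rintro (hYX | rfl) hXY
    · exact p.irrefl _ (p.trans _ _ _ hYX hXY)
    · exact p.irrefl _ hXY

theorem weak_refl (p : Pref O) (X : Finset O) : p.weak X X :=
  Or.inr rfl

theorem strict_of_weak_of_strict (hXY : p.weak X Y) (hYZ : p.strict Y Z) : p.strict X Z := by
  rcases hXY with hXY | rfl
  · exact p.trans _ _ _ hXY hYZ
  · exact hYZ

theorem weak_trans (hXY : p.weak X Y) (hYZ : p.weak Y Z) : p.weak X Z := by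
  rcases hYZ with hYZ | rfl
  · exact Or.inl (strict_of_weak_of_strict hXY hYZ)
  · exact hXY

theorem weak_antisymm (hXY : p.weak X Y) (hYX : p.weak Y X) : X = Y :=
  hXY.resolve_left (not_strict_iff_weak.2 hYX)

theorem exists_marginally_best (p : Pref O) {S : Finset O} (hS : S.Nonempty) :
    ∃ x ∈ S, ∀ y ∈ S, p.weak {x} {y} := by
  induction hS using Finset.Nonempty.cons_induction with
  | singleton a => exact ⟨a, by simp [weak_refl]⟩
  | cons a S _ _ ih =>
    obtain ⟨x, hxS, hx⟩ := ih
    by_cases hax : p.strict {a} {x}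
    · exact ⟨a, by simp, by simpa [weak_refl] using fun y hy ↦ weak_trans (Or.inl hax) (hx y hy)⟩
    · exact ⟨x, by simp [hxS], by simpa using ⟨not_strict_iff_weak.1 hax, hx⟩⟩

section Best

variable [Nonempty O] {S : Finset O}

theorem best_mem_and_weak (p : Pref O) (hS : S.Nonempty) :
    p.best S ∈ S ∧ ∀ y ∈ S, p.weak {p.best S} {y} := by
  rw [best, dif_pos (p.exists_marginally_best hS)]
  exact (p.exists_marginally_best hS).choose_spec

theorem best_mem (p : Pref O) (hS : S.Nonempty) : p.best S ∈ S :=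
  (p.best_mem_and_weak hS).1

theorem best_weak (p : Pref O) {y : O} (hy : y ∈ S) : p.weak {p.best S} {y} :=
  (p.best_mem_and_weak ⟨y, hy⟩).2 y hy

theorem best_eq_of_forall_weak {x : O} (hxS : x ∈ S) (hx : ∀ y ∈ S, p.weak {x} {y}) :
    p.best S = x :=
  Finset.singleton_injective <|
    weak_antisymm (p.best_weak hxS) (hx _ (p.best_mem ⟨x, hxS⟩))

end Best

end Pref

/-- Objectwise dominance of the bundle `X` over the bundle `Y`: some bijection from `Y` onto `X`
replaces every object by one that is marginally at least as good. This is how bundles obtained by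
trading are compared; `f` matters only on `Y`. -/
def Dominates (p : Pref O) (X Y : Finset O) : Prop :=
  ∃ f : O → O, Set.BijOn f Y X ∧ ∀ y ∈ Y, p.weak {f y} {y}

namespace Dominates

variable {p : Pref O} {X Y X' Y' : Finset O}

theorem refl (p : Pref O) (X : Finset O) : Dominates p X X :=
  ⟨id, Set.bijOn_id _, fun _ _ ↦ p.weak_refl _⟩

theorem union [DecidableEq O] (h : Dominates p X Y) (h' : Dominates p X' Y')
    (hX : Disjoint X X') (hY : Disjoint Y Y') : Dominates p (X ∪ X') (Y ∪ Y') := by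
  obtain ⟨f, hf, hfY⟩ := h
  obtain ⟨g, hg, hgY'⟩ := h'
  let k : O → O := fun y ↦ if y ∈ Y then f y else g y
  have hkf : ∀ y ∈ Y, k y = f y := fun y hy ↦ if_pos hy
  have hkg : ∀ y ∈ Y', k y = g y := fun y hy ↦ if_neg (Finset.disjoint_right.1 hY hy)
  have hkX : Set.BijOn k Y X := hf.congr fun y hy ↦ (hkf y hy).symm
  have hkX' : Set.BijOn k Y' X' := hg.congr fun y hy ↦ (hkg y hy).symm
  have hk_inj : Set.InjOn k (Y ∪ Y') :=
    (Set.injOn_union (Finset.disjoint_coe.2 hY)).2 ⟨hkX.injOn, hkX'.injOn, fun a ha b hb hab ↦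
      Finset.disjoint_left.1 hX (hkX.mapsTo ha) (hab ▸ hkX'.mapsTo hb)⟩
  refine ⟨k, by simpa only [Finset.coe_union] using hkX.union hkX' hk_inj, fun y hy ↦ ?_⟩
  rcases Finset.mem_union.1 hy with hy | hy
  · rw [hkf y hy]; exact hfY y hy
  · rw [hkg y hy]; exact hgY' y hy

theorem eq_of_forall_strict (h : Dominates p X Y)
    (hXY : ∀ x ∉ Y, x ∈ X → ∀ y ∈ Y, p.strict {y} {x}) : X = Y := by
  obtain ⟨f, hf, hfY⟩ := h
  have hsub : X ⊆ Y := by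
    intro x hx
    obtain ⟨y, hy, rfl⟩ := hf.surjOn hx
    by_contra hfy
    exact Pref.not_strict_iff_weak.2 (hfY y hy) (hXY _ hfy hx y hy)
  exact Finset.eq_of_subset_of_card_le hsub
    (Finset.card_le_card_of_injOn f hf.mapsTo hf.injOn)

end Dominates

namespace Responsive

variable [DecidableEq O] {p : Pref O} {X Y Z : Finset O}

theorem weak_insert (hp : Responsive p) {y z : O} (hy : y ∉ X) (hz : z ∉ X)
    (hyz : p.weak {y} {z}) : p.weak (insert y X) (insert z X) := by
  rcases hyz with hyz | hyz
  · exact Or.inl ((hp X y z hy hz).2 hyz)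
  · rw [Finset.singleton_injective hyz]
    exact p.weak_refl _

/- The objects of `Y` are replaced one at a time, best first: the replacement of the best object of
`Y` cannot be another object of `Y`, so responsiveness applies to each single replacement. -/
theorem weak_union_image (hp : Responsive p) {f : O → O} (hf : Set.InjOn f Y)
    (hfY : ∀ y ∈ Y, p.weak {f y} {y}) (hZY : Disjoint Z Y) (hZfY : Disjoint Z (Y.image f)) :
    p.weak (Z ∪ Y.image f) (Z ∪ Y) := by
  induction Y using Finset.strongInduction generalizing Z with
  | H Y ih =>
    rcases Y.eq_empty_or_nonempty with rfl | hY
    · exact Or.inr (by simp)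
    obtain ⟨b, hbY, hb⟩ := p.exists_marginally_best hY
    obtain ⟨Y', hbY', rfl⟩ : ∃ Y', b ∉ Y' ∧ Y = insert b Y' :=
      ⟨Y.erase b, by simp, (Finset.insert_erase hbY).symm⟩
    have hfb : f b ∉ Y' := fun hfbY' ↦ hbY' <| by
      rwa [Finset.singleton_injective (Pref.weak_antisymm (hb _ (by simp [hfbY'])) (hfY b hbY))]
    have hfb_image : f b ∉ Y'.image f := by
      rw [Finset.coe_insert, Set.injOn_insert (by simpa using hbY')] at hf
      simpa using hf.2
    rw [Finset.disjoint_insert_right] at hZY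
    rw [Finset.image_insert, Finset.disjoint_insert_right] at hZfY
    have replace_rest : p.weak (insert (f b) Z ∪ Y'.image f) (insert (f b) Z ∪ Y') :=
      ih Y' (Finset.ssubset_insert hbY') (hf.mono (by simp))
        (fun y hy ↦ hfY y (Finset.mem_insert_of_mem hy))
        (Finset.disjoint_insert_left.2 ⟨hfb, hZY.2⟩)
        (Finset.disjoint_insert_left.2 ⟨hfb_image, hZfY.2⟩)
    have replace_best : p.weak (insert (f b) (Z ∪ Y')) (insert b (Z ∪ Y')) :=
      hp.weak_insert (by simp [hZfY.1, hfb]) (by simp [hZY.1, hbY']) (hfY b hbY)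
    rw [Finset.image_insert, Finset.union_insert, Finset.union_insert]
    rw [Finset.insert_union, Finset.insert_union] at replace_rest
    exact Pref.weak_trans replace_rest replace_best

theorem weak_of_dominates (hp : Responsive p) (h : Dominates p X Y) : p.weak X Y := by
  obtain ⟨f, hf, hfY⟩ := h
  obtain rfl : Y.image f = X := Finset.coe_injective (by rw [Finset.coe_image, hf.image_eq])
  simpa using hp.weak_union_image hf.injOn hfY (Finset.disjoint_empty_left _)
    (Finset.disjoint_empty_left _)

end Responsive

theorem exists_mem_periodicPts_of_mapsTo {α : Type*} {f : α → α} {s : Set α} (hs : s.Finite)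
    (hne : s.Nonempty) (hf : Set.MapsTo f s s) : ∃ x ∈ s, x ∈ Function.periodicPts f := by
  obtain ⟨x, hx⟩ := hne
  have hmem (n : ℕ) : f^[n] x ∈ s := hf.iterate n hx
  obtain ⟨m, -, n, -, hmn, heq⟩ :=
    Set.infinite_univ.exists_lt_map_eq_of_mapsTo (fun n _ ↦ hmem n) hs
  refine ⟨f^[m] x, hmem m, Function.mk_mem_periodicPts (Nat.sub_pos_of_lt hmn) ?_⟩
  rw [Function.IsPeriodicPt, Function.IsFixedPt, ← Function.iterate_add_apply,
    Nat.sub_add_cancel hmn.le, heq]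

section Round

variable [Nonempty O]

/-- The pointing map of a TTC round in which the objects `S` remain: each object is sent to the
object that its owner points to. -/
noncomputable def pointTo (pref : N → Pref O) (own : O → N) (S : Finset O) (o : O) : O :=
  (pref (own o)).best S

/-- The objects of `S` that lie on a trading cycle, encoded as the periodic points of the pointing
map. -/
noncomputable def cycling (pref : N → Pref O) (own : O → N) (S : Finset O) : Finset O :=
  {o ∈ S | o ∈ Function.periodicPts (pointTo pref own S)}

/-- The objects that agent `i` obtains in a TTC round in which the objects `S` remain. -/
noncomputable def received [DecidableEq O] (pref : N → Pref O) (own : O → N) (S : Finset O)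
    (i : N) : Finset O :=
  ({o ∈ cycling pref own S | own o = i} : Finset O).image (pointTo pref own S)

variable {pref pref' : N → Pref O} {own : O → N} {S T : Finset O} {i : N}

theorem pointTo_mem (hS : S.Nonempty) (o : O) : pointTo pref own S o ∈ S :=
  Pref.best_mem _ hS

theorem pointTo_congr (hi : (pref' i).best S = (pref i).best S)
    (hother : ∀ j ≠ i, pref' j = pref j) : pointTo pref' own S = pointTo pref own S := by
  funext o
  by_cases ho : own o = i
  · rw [pointTo, pointTo, ho, hi]
  · rw [pointTo, pointTo, hother _ ho]

theorem cycling_subset : cycling pref own S ⊆ S :=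
  Finset.filter_subset _ _

theorem coe_cycling (hS : S.Nonempty) :
    (cycling pref own S : Set O) = Function.periodicPts (pointTo pref own S) := by
  have hsub : Function.periodicPts (pointTo pref own S) ⊆ S :=
    Function.periodicPts_subset_range.trans (Set.range_subset_iff.2 (pointTo_mem hS))
  ext o
  simpa [cycling] using @hsub o

theorem bijOn_pointTo_cycling (hS : S.Nonempty) :
    Set.BijOn (pointTo pref own S) (cycling pref own S) (cycling pref own S) := by
  rw [coe_cycling hS]
  exact Function.bijOn_periodicPts _

theorem cycling_nonempty (hS : S.Nonempty) : (cycling pref own S).Nonempty := by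
  rw [← Finset.coe_nonempty, coe_cycling hS]
  obtain ⟨o, -, ho⟩ := exists_mem_periodicPts_of_mapsTo S.finite_toSet hS
    (fun o _ ↦ pointTo_mem (pref := pref) (own := own) hS o)
  exact ⟨o, ho⟩

variable [DecidableEq O]

theorem card_sdiff_cycling_le {n : ℕ} (hS : S.Nonempty) (hn : S.card ≤ n + 1) :
    (S \ cycling pref own S).card ≤ n :=
  Nat.le_of_lt_succ <| hn.trans_lt' <|
    Finset.card_lt_card (Finset.sdiff_ssubset cycling_subset (cycling_nonempty hS))

theorem received_subset_cycling (hS : S.Nonempty) :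
    received pref own S i ⊆ cycling pref own S :=
  Finset.image_subset_iff.2 fun _ ho ↦
    (bijOn_pointTo_cycling hS).mapsTo (Finset.mem_of_mem_filter _ ho)

theorem disjoint_received (hS : S.Nonempty) (hT : T ⊆ S \ cycling pref own S) :
    Disjoint (received pref own S i) T :=
  Finset.disjoint_sdiff.mono (received_subset_cycling hS) hT

theorem dominates_received (hS : S.Nonempty) :
    Dominates (pref i) (received pref own S i) {o ∈ cycling pref own S | own o = i} := by
  refine ⟨pointTo pref own S, ?_, fun o ho ↦ ?_⟩
  · rw [received, Finset.coe_image]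
    exact ((bijOn_pointTo_cycling hS).injOn.mono
      (Finset.coe_subset.2 (Finset.filter_subset _ _))).bijOn_image
  · obtain ⟨hoC, rfl⟩ := Finset.mem_filter.1 ho
    exact Pref.best_weak _ (cycling_subset hoC)

end Round

section Run

variable [Nonempty O] [DecidableEq O] {pref : N → Pref O} {own : O → N} {S : Finset O} {n : ℕ}
  {i : N}

theorem TTCaux_empty : TTCaux pref own n ∅ i = ∅ := by
  cases n <;> simp [TTCaux]

theorem TTCaux_succ (hS : S.Nonempty) :
    TTCaux pref own (n + 1) S i =
      received pref own S i ∪ TTCaux pref own n (S \ cycling pref own S) i := by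
  rw [TTCaux]
  exact if_pos hS

theorem TTCaux_subset : TTCaux pref own n S i ⊆ S := by
  induction n generalizing S with
  | zero => exact Finset.empty_subset S
  | succ n ih =>
    rcases S.eq_empty_or_nonempty with rfl | hS
    · rw [TTCaux_empty]
    rw [TTCaux_succ hS]
    exact Finset.union_subset ((received_subset_cycling hS).trans cycling_subset)
      (ih.trans Finset.sdiff_subset)

/- The bound on the cardinality says that the fuel `n` suffices to allocate all of `S`. -/
theorem TTCaux_induction (pref : N → Pref O) (own : O → N)
    {motive : ∀ (n : ℕ) (S : Finset O), S.card ≤ n → Prop}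
    (empty : ∀ n hn, motive n ∅ hn)
    (round : ∀ n S hn (hS : S.Nonempty),
      motive n (S \ cycling pref own S) (card_sdiff_cycling_le hS hn) → motive (n + 1) S hn)
    (n : ℕ) (S : Finset O) (hn : S.card ≤ n) : motive n S hn := by
  induction n generalizing S with
  | zero =>
    obtain rfl := Finset.card_eq_zero.1 (Nat.le_zero.1 hn)
    exact empty 0 hn
  | succ n ih =>
    rcases S.eq_empty_or_nonempty with rfl | hS
    · exact empty (n + 1) hn
    exact round n S hn hS (ih _ _)

theorem dominates_TTCaux_endowment (hn : S.card ≤ n) :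
    Dominates (pref i) (TTCaux pref own n S i) {o ∈ S | own o = i} := by
  induction n, S, hn using TTCaux_induction pref own with
  | empty n => simpa [TTCaux_empty] using Dominates.refl (pref i) ∅
  | round n S _ hS ih =>
    have endowment_split : ({o ∈ S | own o = i} : Finset O) =
        {o ∈ cycling pref own S | own o = i} ∪ {o ∈ S \ cycling pref own S | own o = i} := by
      rw [← Finset.filter_union, Finset.union_sdiff_of_subset cycling_subset]
    rw [TTCaux_succ hS, endowment_split]
    exact (dominates_received hS).union ih (disjoint_received hS TTCaux_subset)
      (Finset.disjoint_filter_filter Finset.disjoint_sdiff)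

theorem TTCaux_eq_endowment (hn : S.card ≤ n)
    (hown : ∀ u ∈ S, own u ≠ i → ∀ v ∈ S, own v = i → (pref i).strict {v} {u}) :
    TTCaux pref own n S i = {o ∈ S | own o = i} := by
  refine (dominates_TTCaux_endowment hn).eq_of_forall_strict fun u hu hu_mem v hv ↦ ?_
  have huS : u ∈ S := TTCaux_subset hu_mem
  obtain ⟨hvS, hv⟩ := Finset.mem_filter.1 hv
  exact hown u huS (fun h ↦ hu (Finset.mem_filter.2 ⟨huS, h⟩)) v hvS hv

end Run

/-- A weakening of `TruncationStrategy` that admits more misreports: relative to some object `x`,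
`p'` still ranks each object better than `x` above everything it beat under `p`, and ranks the
whole endowment above the other agents' objects that are not better than `x`. It leaves free how
`p'` orders these objects among themselves, and likewise the endowed objects not better than
`x`. -/
def TailDemotion (ωi : Finset O) (p p' : Pref O) : Prop :=
  ∃ x : O,
    (∀ u v : O, p.strict {u} {x} → p.strict {u} {v} → p'.strict {u} {v}) ∧
    (∀ u ∉ ωi, p.weak {x} {u} → ∀ v ∈ ωi, p'.strict {v} {u})

theorem TruncationStrategy.tailDemotion {ωi : Finset O} {p p' : Pref O}
    (h : TruncationStrategy ωi p p') : TailDemotion ωi p p' := by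
  obtain ⟨x, -, hkeep, hdrop⟩ := h
  refine ⟨x, fun u v hux huv ↦ ?_, fun u hu hxu v hv ↦ hdrop u v ⟨hu, hxu⟩ fun h ↦ h.1 hv⟩
  have hu : ¬ (u ∉ ωi ∧ p.weak {x} {u}) := fun h ↦ Pref.not_strict_iff_weak.2 h.2 hux
  by_cases hv : v ∉ ωi ∧ p.weak {x} {v}
  · exact hdrop v u hv hu
  · exact (hkeep u v hu hv).1 huv

theorem Pref.best_eq_best_of_strict [Nonempty O] {p p' : Pref O} {S : Finset O} {x u : O}
    (hkeep : ∀ v w : O, p.strict {v} {x} → p.strict {v} {w} → p'.strict {v} {w})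
    (huS : u ∈ S) (hux : p.strict {u} {x}) : p'.best S = p.best S := by
  have hbest : p.strict {p.best S} {x} := strict_of_weak_of_strict (p.best_weak huS) hux
  exact best_eq_of_forall_weak (p.best_mem ⟨u, huS⟩) fun v hv ↦
    (p.best_weak hv).imp_left (hkeep _ v hbest)

theorem TailDemotion.dominates_TTCaux [Nonempty O] [DecidableEq O] {pref pref' : N → Pref O}
    {own : O → N} {i : N} {ωi S : Finset O} {n : ℕ} (h : TailDemotion ωi (pref i) (pref' i))
    (hother : ∀ j ≠ i, pref' j = pref j) (hown : ∀ o, o ∈ ωi ↔ own o = i) (hn : S.card ≤ n) :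
    Dominates (pref i) (TTCaux pref own n S i) (TTCaux pref' own n S i) := by
  obtain ⟨x, hkeep, hdrop⟩ := h
  induction n, S, hn using TTCaux_induction pref own with
  | empty n => simpa only [TTCaux_empty] using Dominates.refl (pref i) ∅
  | round n S hn hS ih =>
    by_cases hx : ∃ u ∈ S, (pref i).strict {u} {x}
    · obtain ⟨u, huS, hux⟩ := hx
      have hpoint : pointTo pref' own S = pointTo pref own S :=
        pointTo_congr (Pref.best_eq_best_of_strict hkeep huS hux) hother
      have hcycling : cycling pref' own S = cycling pref own S := by rw [cycling, hpoint, cycling]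
      have hreceived : received pref' own S i = received pref own S i := by
        rw [received, hcycling, hpoint, received]
      rw [TTCaux_succ hS, TTCaux_succ hS, hreceived, hcycling]
      exact (Dominates.refl _ _).union ih (disjoint_received hS TTCaux_subset)
        (disjoint_received hS TTCaux_subset)
    · push Not at hx
      have keeps_endowment : TTCaux pref' own (n + 1) S i = {o ∈ S | own o = i} :=
        TTCaux_eq_endowment hn fun u huS hu v _ hv ↦
          hdrop u (mt (hown u).1 hu) (Pref.not_strict_iff_weak.1 (hx u huS)) v ((hown v).2 hv)
      rw [keeps_endowment]
      exact dominates_TTCaux_endowment hn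

theorem Allocation.mem_bundle_iff (ω : Allocation N O) {i : N} {o : O} :
    o ∈ ω.bundle i ↔ ω.owner o = i := by
  have hmem : o ∈ ω.bundle (ω.owner o) := (ω.cover o).choose_spec
  refine ⟨fun ho ↦ ?_, fun h ↦ h ▸ hmem⟩
  by_contra hne
  exact ω.disj _ _ hne o hmem ho

theorem stmt6_general [Fintype O] [DecidableEq N] [DecidableEq O] [Nonempty O]
    (ω : Allocation N O) {P : N → Pref O} {i : N} {p' : Pref O} (hP : Responsive (P i))
    (h : TailDemotion (ω.bundle i) (P i) p') :
    (P i).weak (TTC P ω i) (TTC (Function.update P i p') ω i) := by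
  rw [← Function.update_self i p' P] at h
  exact hP.weak_of_dominates <| h.dominates_TTCaux
    (fun j hj ↦ Function.update_of_ne hj p' P) (fun _ ↦ ω.mem_bundle_iff) (Nat.le_succ _)

/-- On the responsive domain, TTC satisfies truncation-proofness. -/
theorem stmt6 {N O : Type} [Fintype N] [Fintype O] [DecidableEq N] [DecidableEq O] [Nonempty O]
    (hN : 2 ≤ Fintype.card N) (hNO : Fintype.card N ≤ Fintype.card O)
    (ω : Allocation N O) :
    ∀ P : N → Pref O, (∀ i, Responsive (P i)) → ∀ i : N, ∀ p' : Pref O, Responsive p' →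
      TruncationStrategy (ω.bundle i) (P i) p' →
      (P i).weak (TTC P ω i) (TTC (Function.update P i p') ω i) := by
  intro _ hP i _ _ h
  exact stmt6_general ω (hP i) h.tailDemotion

end Realloc
end

section
/- On the responsive domain ℛ, every marginal rule satisfying the worst-endowment lower bound (WELB) and truncation-proofness (TP) also satisfies balancedness (BAL). -/
attribute [local instance] Classical.propDecidable

namespace Realloc

variable {N O : Type}

/-!
Let `A` be the endowment of agent `i`. By marginality, the bundle of `i` does not change when her
preference is replaced by one with the same marginal that always prefers smaller bundles. From that
preference, consider the truncation that drops every object outside `A` below the objects of `A`.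
After it, the worst-endowment lower bound confines `i` to a subset of `A`, so truncation-proofness
says that `i` originally received at most `|A|` objects. Every allocation distributes all the
objects, so these inequalities, summed over the agents, must all be equalities.

Both auxiliary preferences compare additive scores first and break ties by the original preference,
an operation that preserves responsiveness.
-/

lemma Allocation.sum_card_bundle [Fintype N] (μ : Allocation N O) :
    ∑ i, (μ.bundle i).card = Nat.card O := by
  have hdisj : Set.PairwiseDisjoint (Finset.univ : Finset N) μ.bundle := fun i _ j _ hij ↦
    Finset.disjoint_left.2 (μ.disj i j hij)
  have hcover : (Finset.univ.biUnion μ.bundle : Set O) = Set.univ :=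
    Set.eq_univ_of_forall fun o ↦ by simpa using μ.cover o
  rw [← Finset.card_biUnion hdisj, ← Set.ncard_coe_finset, hcover, Set.ncard_univ]

namespace Pref

variable (p : Pref O)

instance isStrictTotalOrder_singleton :
    IsStrictTotalOrder O fun x y ↦ p.strict {x} {y} where
  trichotomous x y hxy hyx := by simpa [hxy, hyx] using p.total {x} {y}
  irrefl x := p.irrefl {x}
  trans x y z := p.trans {x} {y} {z}

lemma exists_best_object [Finite O] [Nonempty O] : ∃ b, ∀ y, p.weak {b} {y} := by
  let _ := linearOrderOfSTO fun x y ↦ p.strict {x} {y} -- smaller is better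
  obtain ⟨b, hb⟩ := Finite.exists_min (id : O → O)
  exact ⟨b, fun y ↦ (hb y).symm.imp_right (congrArg _)⟩

lemma exists_worst_object_mem {A : Finset O} (hA : A.Nonempty) :
    ∃ w ∈ A, ∀ y ∈ A, p.weak {y} {w} := by
  let _ := linearOrderOfSTO fun x y ↦ p.strict {x} {y}
  obtain ⟨w, hwA, hw⟩ := A.exists_max_image id hA
  exact ⟨w, hwA, fun y hy ↦ (hw y hy).symm.imp_right (congrArg _)⟩

/-- The preference that compares bundles by their total score under `s`, higher being better, and
breaks ties by `p`. It provides marginal-preserving and truncating modifications of `p`. -/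
def scoreFirst (s : O → ℤ) : Pref O where
  strict X Y := ∑ o ∈ Y, s o < ∑ o ∈ X, s o ∨ ∑ o ∈ X, s o = ∑ o ∈ Y, s o ∧ p.strict X Y
  total X Y := by grind [p.total X Y]
  irrefl X := by simp [p.irrefl]
  trans X Y Z := by grind [p.trans X Y Z]

variable {p}

lemma scoreFirst_strict_singleton {s : O → ℤ} {x y : O} :
    (p.scoreFirst s).strict {x} {y} ↔ s y < s x ∨ s x = s y ∧ p.strict {x} {y} := by
  simp only [scoreFirst, Finset.sum_singleton]

lemma margEq_scoreFirst_const (c : ℤ) : MargEq p (p.scoreFirst fun _ ↦ c) := fun x y ↦ by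
  simp [scoreFirst_strict_singleton]

lemma card_le_of_weak_scoreFirst_neg_one {X Y : Finset O}
    (h : (p.scoreFirst fun _ ↦ -1).weak X Y) : X.card ≤ Y.card := by
  rcases h with (hlt | ⟨heq, -⟩) | rfl
  · exact le_of_lt (by simpa using hlt)
  · exact le_of_eq (by simpa using heq)
  · rfl

lemma scoreFirst_indicator_strict {A : Finset O} {x y : O} (hx : x ∈ A) (hy : y ∉ A) :
    (p.scoreFirst ((A : Set O).indicator 1)).strict {x} {y} :=
  scoreFirst_strict_singleton.2 (Or.inl (by simp [hx, hy]))

lemma truncationStrategy_scoreFirst_indicator [Finite O] [Nonempty O] (p : Pref O)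
    (A : Finset O) : TruncationStrategy A p (p.scoreFirst ((A : Set O).indicator 1)) := by
  obtain ⟨b, hb⟩ := p.exists_best_object
  refine ⟨b, ?_⟩
  simp only [hb, and_true, not_not]
  refine ⟨fun u v hu hv ↦ ?outside, fun u v hu hv ↦ ?inside,
    fun u v hu hv ↦ scoreFirst_indicator_strict hv hu⟩
  case outside | inside => simp [scoreFirst_strict_singleton, hu, hv]

end Pref

/-- A domain closed under refining score comparisons by its members. Besides the responsive domain,
the domain of all preferences has this property. -/
def ClosedUnderScoring (D : Pref O → Prop) : Prop :=
  ∀ p, D p → ∀ s : O → ℤ, D (p.scoreFirst s)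

lemma closedUnderScoring_responsive [DecidableEq O] :
    ClosedUnderScoring (Responsive : Pref O → Prop) := by
  intro p hp s X y z hy hz
  rw [Pref.scoreFirst_strict_singleton, ← hp X y z hy hz]
  simp only [Pref.scoreFirst, Finset.sum_insert hy, Finset.sum_insert hz, add_lt_add_iff_right,
    add_left_inj]

section Rules

variable {D : Pref O → Prop} {ω : Allocation N O} {φ : (N → Pref O) → Allocation N O}

lemma forall_domain_update [DecidableEq N] {P : N → Pref O} (hP : ∀ j, D (P j)) {q : Pref O}
    (hq : D q) (i : N) : ∀ j, D (Function.update P i q j) :=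
  (Function.forall_update_iff P fun _ ↦ D).2 ⟨hq, fun j _ ↦ hP j⟩

lemma RMAR.bundle_update [DecidableEq N] (hMAR : RMAR D φ) {P : N → Pref O}
    (hP : ∀ j, D (P j)) {i : N} {q : Pref O} (hq : D q) (hPq : MargEq (P i) q) (j : N) :
    (φ (Function.update P i q)).bundle j = (φ P).bundle j := by
  refine (hMAR P _ hP (forall_domain_update hP hq i) (fun k ↦ ?_) j).symm
  obtain rfl | hk := eq_or_ne k i
  · rwa [Function.update_self]
  · rw [Function.update_of_ne hk]
    exact fun _ _ ↦ Iff.rfl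

lemma RWELB.bundle_subset_endowment (hWELB : RWELB D ω φ) {P : N → Pref O}
    (hP : ∀ j, D (P j)) {i : N}
    (htop : ∀ x ∈ ω.bundle i, ∀ y ∉ ω.bundle i, (P i).strict {x} {y}) :
    (φ P).bundle i ⊆ ω.bundle i := by
  intro o ho
  obtain ⟨w, hw, hworst⟩ := (P i).exists_worst_object_mem (ω.nonempty i)
  by_contra hoω
  have hwo : (P i).strict {w} {o} := htop w hw o hoω
  rcases hWELB P hP i o ho w hw hworst with how | how
  · exact (P i).irrefl _ ((P i).trans _ _ _ how hwo)
  · exact (P i).irrefl _ (how ▸ hwo)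

lemma card_bundle_le_card_endowment [Finite O] [DecidableEq N] (hD : ClosedUnderScoring D)
    (hMAR : RMAR D φ) (hWELB : RWELB D ω φ) (hTP : RTP D ω φ) {P : N → Pref O}
    (hP : ∀ j, D (P j)) (i : N) : ((φ P).bundle i).card ≤ (ω.bundle i).card := by
  have : Nonempty O := (ω.nonempty i).nonempty
  let q := (P i).scoreFirst fun _ ↦ -1
  let t := q.scoreFirst ((ω.bundle i : Set O).indicator 1)
  have hq : D q := hD _ (hP i) _
  have ht : D t := hD _ hq _
  have hbundle : (φ (Function.update P i q)).bundle i = (φ P).bundle i :=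
    hMAR.bundle_update hP hq (Pref.margEq_scoreFirst_const _) i
  have htrunc : q.weak ((φ P).bundle i) ((φ (Function.update P i t)).bundle i) := by
    have h := hTP _ (forall_domain_update hP hq i) i t ht
    rw [Function.update_self, Function.update_idem, hbundle] at h
    exact h (q.truncationStrategy_scoreFirst_indicator _)
  have hsubset : (φ (Function.update P i t)).bundle i ⊆ ω.bundle i := by
    refine hWELB.bundle_subset_endowment (forall_domain_update hP ht i) fun x hx y hy ↦ ?_
    rw [Function.update_self]
    exact Pref.scoreFirst_indicator_strict hx hy
  exact (Pref.card_le_of_weak_scoreFirst_neg_one htrunc).trans (Finset.card_le_card hsubset)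

end Rules

theorem stmt7_general [Finite N] [Finite O] [DecidableEq N] {D : Pref O → Prop}
    (hD : ClosedUnderScoring D) (ω : Allocation N O) (φ : (N → Pref O) → Allocation N O)
    (hMAR : RMAR D φ) (hWELB : RWELB D ω φ) (hTP : RTP D ω φ) :
    RBAL D ω φ := by
  intro P hP i
  have := Fintype.ofFinite N
  have hle : ∀ j ∈ Finset.univ, ((φ P).bundle j).card ≤ (ω.bundle j).card := fun j _ ↦
    card_bundle_le_card_endowment hD hMAR hWELB hTP hP j
  have hsum : ∑ j, ((φ P).bundle j).card = ∑ j, (ω.bundle j).card := by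
    rw [(φ P).sum_card_bundle, ω.sum_card_bundle]
  exact (Finset.sum_eq_sum_iff_of_le hle).1 hsum i (Finset.mem_univ i)

/-- On the responsive domain, every marginal rule satisfying WELB and TP
also satisfies BAL. -/
theorem stmt7 {N O : Type} [Fintype N] [Fintype O] [DecidableEq N] [DecidableEq O]
    (hN : 2 ≤ Fintype.card N) (hNO : Fintype.card N ≤ Fintype.card O)
    (ω : Allocation N O) (φ : (N → Pref O) → Allocation N O)
    (hMAR : RMAR Responsive φ) (hWELB : RWELB Responsive ω φ)
    (hTP : RTP Responsive ω φ) :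
    RBAL Responsive ω φ := by
  exact stmt7_general closedUnderScoring_responsive ω φ hMAR hWELB hTP

end Realloc
end

section
/- In the single-object environment (the Shapley–Scarf housing market), a rule satisfies Pareto efficiency (PE), individual rationality (IR), and truncation-proofness (TP) if and only if it equals the Top Trading Cycles rule TTC. -/
attribute [local instance] Classical.propDecidable

namespace Housing

/-- A strict linear order on objects (identified with agents: agent `i` owns object `i`). -/
structure SPref (A : Type) : Type where
  strict : A → A → Prop
  total : ∀ x y : A, strict x y ∨ x = y ∨ strict y x
  irrefl : ∀ x : A, ¬ strict x x
  trans : ∀ x y z : A, strict x y → strict y z → strict x z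

/-- The weak relation associated with a strict preference. -/
def SPref.weak {A : Type} (p : SPref A) (x y : A) : Prop :=
  p.strict x y ∨ x = y

variable {N : Type}

/-- The most-preferred object of a (nonempty) finite set. -/
noncomputable def sbest [Nonempty N] (p : SPref N) (S : Finset N) : N :=
  if h : ∃ x : N, x ∈ S ∧ ∀ y ∈ S, p.weak x y then h.choose
  else Classical.arbitrary N

/-- The Top Trading Cycles algorithm with fuel in the single-object (housing market)
environment, where objects are identified with their owners: at each step, every agent
points to her most-preferred remaining object; agents whose object lies on a cycle of
this functional graph trade and are removed. -/
noncomputable def TTC1aux [Nonempty N] [DecidableEq N] (pref : N → SPref N) :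
    ℕ → Finset N → N → N
  | 0, _, i => i
  | fuel + 1, S, i =>
      let g : N → N := fun o => sbest (pref o) S
      let C : Finset N := S.filter fun o => ∃ k : ℕ, 0 < k ∧ g^[k] o = o
      if i ∈ C then g i else TTC1aux pref fuel (S \ C) i

/-- The Top Trading Cycles rule in the housing market. -/
noncomputable def TTC1 [Fintype N] [Nonempty N] [DecidableEq N]
    (pref : N → SPref N) (i : N) : N :=
  TTC1aux pref (Fintype.card N + 1) Finset.univ i

/-- Pareto efficiency of a rule: no (bijective) allocation Pareto dominates its outcome. -/
def PE1 (φ : (N → SPref N) → N → N) : Prop :=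
  ∀ P : N → SPref N, ∀ ν : N → N, Function.Bijective ν →
    ¬ ((∀ i, (P i).weak (ν i) (φ P i)) ∧ ∃ j, (P j).strict (ν j) (φ P j))

/-- Individual rationality: every agent weakly prefers her assignment to her endowment. -/
def IR1 (φ : (N → SPref N) → N → N) : Prop :=
  ∀ P : N → SPref N, ∀ i : N, (P i).weak (φ P i) i

/-- `p'` is a truncation strategy for `p` for agent `i` (whose endowment is object `i`):
the tail set `{o ≠ i : x R o}` (for some object `x`) is moved to the bottom, preserving
the relative order within the set and within its complement. -/
def Trunc1 (i : N) (p p' : SPref N) : Prop :=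
  ∃ x : N,
    (∀ u v : N, (u ≠ i ∧ p.weak x u) → (v ≠ i ∧ p.weak x v) →
      (p.strict u v ↔ p'.strict u v)) ∧
    (∀ u v : N, ¬(u ≠ i ∧ p.weak x u) → ¬(v ≠ i ∧ p.weak x v) →
      (p.strict u v ↔ p'.strict u v)) ∧
    (∀ u v : N, (u ≠ i ∧ p.weak x u) → ¬(v ≠ i ∧ p.weak x v) → p'.strict v u)

/-- Truncation-proofness. -/
def TP1 [DecidableEq N] (φ : (N → SPref N) → N → N) : Prop :=
  ∀ P : N → SPref N, ∀ i : N, ∀ p' : SPref N, Trunc1 i (P i) p' →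
    (P i).weak (φ P i) (φ (Function.update P i p') i)

/-!
The proof describes the TTC outcome by the order in which its cycles are executed. A *layered*
allocation `x` comes with a rank `r`, constant along the cycles of `x`, such that everybody weakly
prefers her assignment to every object of the same or a later rank. On a finite set an injection
cannot enter a set which it maps into itself, so as long as an allocation agrees with `x` on the
ranks below `i`, it cannot give `i` an object of smaller rank, hence cannot give her anything better
than `x i`. Efficiency, individual rationality and strategy-proofness of TTC follow.

Conversely, let `φ` satisfy PE, IR and TP, and induct on the total number of acceptable objects.
If `φ` gives `i` an object worse than her TTC assignment but other than her endowment, let her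
truncate at this object. This keeps the TTC allocation layered and makes fewer objects acceptable,
so by induction she now receives her TTC assignment, contradicting TP. Hence in the first rank where
`φ` and TTC differ, the agents for whom they differ keep their endowments, and executing the TTC
cycles among the agents of this rank who keep their endowments is a Pareto improvement.
-/

open Function Set

section Finite

variable {α ι : Type*} {f : α → α} {s : Set α}

theorem apply_mem_iff_of_mapsTo (hf : Injective f) (hs : s.Finite) (h : MapsTo f s s) {a : α} :
    f a ∈ s ↔ a ∈ s := by
  have himage : f '' s = s := ((hs.injOn_iff_bijOn_of_mapsTo h).1 hf.injOn).image_eq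
  conv_lhs => rw [← himage]
  exact hf.mem_set_image

theorem exists_mem_periodicPts_of_mapsTo (hs : s.Finite) (hne : s.Nonempty) (h : MapsTo f s s) :
    ∃ a ∈ s, a ∈ periodicPts f := by
  obtain ⟨a, ha⟩ := hne
  obtain ⟨m, n, hmn, heq⟩ :=
    hs.exists_lt_map_eq_of_forall_mem (f := fun n => f^[n] a) fun n => h.iterate n ha
  refine ⟨f^[m] a, h.iterate m ha, mk_mem_periodicPts (Nat.sub_pos_of_lt hmn) ?_⟩
  rw [IsPeriodicPt, IsFixedPt, ← iterate_add_apply, Nat.sub_add_cancel hmn.le]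
  exact heq.symm

theorem induction_on_rank [Finite α] [Preorder ι] (r : α → ι) {p : α → Prop}
    (step : ∀ a, (∀ b, r b < r a → p b) → p a) (a : α) : p a :=
  letI := Preorder.lift r
  WellFoundedLT.induction a step

end Finite

namespace SPref

variable {A : Type} (p : SPref A) {T : Set A} {u v : A}

/-- The linear order of a preference, in which the better of two objects is the smaller one. -/
noncomputable abbrev toLinearOrder : LinearOrder A where
  le := p.weak
  lt := p.strict
  le_refl _ := Or.inr rfl
  le_trans u v w := by
    rintro (huv | rfl) (hvw | rfl)
    exacts [Or.inl (p.trans _ _ _ huv hvw), Or.inl huv, Or.inl hvw, Or.inr rfl]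
  le_antisymm u v := by
    rintro (huv | rfl) (hvu | hvu)
    exacts [(p.irrefl _ (p.trans _ _ _ huv hvu)).elim, hvu.symm, rfl, rfl]
  le_total u v := by
    rcases p.total u v with h | h | h
    exacts [Or.inl (Or.inl h), Or.inl (Or.inr h), Or.inr (Or.inl h)]
  lt_iff_le_not_ge u v := by
    refine ⟨fun h => ⟨Or.inl h, ?_⟩, fun ⟨h, hn⟩ => h.resolve_right fun he => hn (Or.inr he.symm)⟩
    rintro (h' | rfl)
    exacts [p.irrefl _ (p.trans _ _ _ h h'), p.irrefl _ h]
  toDecidableLE := Classical.decRel _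

variable {p}

theorem weak.antisymm (h : p.weak u v) (h' : p.weak v u) : u = v :=
  letI := p.toLinearOrder
  le_antisymm h h'

theorem weak.not_strict (h : p.weak u v) : ¬ p.strict v u :=
  letI := p.toLinearOrder
  (show u ≤ v from h).not_gt

theorem weak.strict_of_ne (h : p.weak u v) (hne : u ≠ v) : p.strict u v :=
  h.resolve_right hne

variable (p)

/-- The preference obtained from `p` by moving the objects of `T` to the bottom. -/
def demote (T : Set A) : SPref A where
  strict u v := (u ∉ T ∧ v ∈ T) ∨ ((u ∈ T ↔ v ∈ T) ∧ p.strict u v)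
  total u v := by
    have := p.total u v
    tauto
  irrefl u := by
    have := p.irrefl u
    tauto
  trans u v w := by
    have := p.trans u v w
    tauto

variable {p}

theorem strict_demote_iff (h : u ∈ T ↔ v ∈ T) : (p.demote T).strict u v ↔ p.strict u v := by
  simp only [demote, h, not_and_self_iff, true_and, false_or]

theorem weak.demote (h : p.weak u v) (hu : u ∉ T) : (p.demote T).weak u v := by
  rcases h with h | rfl
  · by_cases hv : v ∈ T
    · exact Or.inl (Or.inl ⟨hu, hv⟩)
    · exact Or.inl ((strict_demote_iff (iff_of_false hu hv)).2 h)
  · exact Or.inr rfl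

theorem weak_of_weak_demote (h : (p.demote T).weak u v) (hv : v ∉ T) : u ∉ T ∧ p.weak u v := by
  rcases h with (⟨_, hv'⟩ | ⟨huv, h⟩) | rfl
  · exact absurd hv' hv
  · exact ⟨fun hu => hv (huv.1 hu), Or.inl h⟩
  · exact ⟨hv, Or.inr rfl⟩

variable (p)

/-- The set of objects moved to the bottom when agent `i` truncates `p` at the object `o`. -/
def tail (i o : A) : Set A :=
  {u | u ≠ i ∧ p.weak o u}

theorem trunc1_demote_tail (i o : A) : Trunc1 i p (p.demote (p.tail i o)) :=
  ⟨o, fun _ _ hu hv => (strict_demote_iff (T := p.tail i o) (iff_of_true hu hv)).symm,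
    fun _ _ hu hv => (strict_demote_iff (T := p.tail i o) (iff_of_false hu hv)).symm,
    fun _ _ hu hv => Or.inl ⟨hv, hu⟩⟩

end SPref

section NumAcceptable

variable [Fintype N]

/-- The number of pairs of an agent and an object which she finds acceptable, that is, weakly
prefers to her endowment. -/
noncomputable def numAcceptable (P : N → SPref N) : ℕ :=
  ∑ i, (Finset.univ.filter fun o => (P i).weak o i).card

theorem numAcceptable_update_demote_lt [DecidableEq N] {P : N → SPref N} {i o : N} {T : Set N}
    (hi : i ∉ T) (ho : o ∈ T) (hoi : (P i).weak o i) :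
    numAcceptable (update P i ((P i).demote T)) < numAcceptable P := by
  have hfilter : (Finset.univ.filter fun u => ((P i).demote T).weak u i) ⊂
      Finset.univ.filter fun u => (P i).weak u i := by
    rw [Finset.ssubset_iff_of_subset
      (Finset.monotone_filter_right _ fun u _ hu => (SPref.weak_of_weak_demote hu hi).2)]
    refine ⟨o, by simpa using hoi, fun h => ?_⟩
    exact (SPref.weak_of_weak_demote (Finset.mem_filter.1 h).2 hi).1 ho
  refine Finset.sum_lt_sum (fun j _ => ?_) ⟨i, Finset.mem_univ i, ?_⟩
  · obtain rfl | hj := eq_or_ne j i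
    · simpa only [update_self] using Finset.card_le_card hfilter.subset
    · rw [update_of_ne hj]
  · simpa only [update_self] using Finset.card_lt_card hfilter

end NumAcceptable

section Layered

variable {ι : Type*}

/-- The agents of `S` trade among themselves according to `x` in layers indexed by the rank `r`:
trading cycles stay within a layer, and everybody weakly prefers her assignment to all objects of
`S` in her own and in later layers. -/
structure IsLayeredOn [LE ι] (P : N → SPref N) (S : Set N) (x : N → N) (r : N → ι) : Prop where
  mapsTo : MapsTo x S S
  injOn : InjOn x S
  rank_apply : ∀ i ∈ S, r (x i) = r i
  weak : ∀ i ∈ S, ∀ o ∈ S, r i ≤ r o → (P i).weak (x i) o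

/-- The allocation `x` of the whole market is layered by the rank `r`. -/
abbrev IsLayered [LE ι] (P : N → SPref N) (x : N → N) (r : N → ι) : Prop :=
  IsLayeredOn P univ x r

theorem IsLayeredOn.congr [LE ι] {P : N → SPref N} {S : Set N} {x y : N → N} {r : N → ι}
    (h : IsLayeredOn P S x r) (hxy : EqOn x y S) : IsLayeredOn P S y r where
  mapsTo := h.mapsTo.congr hxy
  injOn := h.injOn.congr hxy
  rank_apply i hi := hxy hi ▸ h.rank_apply i hi
  weak i hi := hxy hi ▸ h.weak i hi

theorem IsLayeredOn.of_sdiff {P : N → SPref N} {S C : Set N} {x : N → N} {r : N → ℕ}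
    (h : IsLayeredOn P (S \ C) x r) (hCS : C ⊆ S) (hmaps : MapsTo x C C) (hinj : InjOn x C)
    (hweak : ∀ i ∈ C, ∀ o ∈ S, (P i).weak (x i) o) :
    IsLayeredOn P S x (fun i => if i ∈ C then 0 else r i + 1) where
  mapsTo i hi := by
    by_cases hiC : i ∈ C
    · exact hCS (hmaps hiC)
    · exact (h.mapsTo ⟨hi, hiC⟩).1
  injOn := by
    rw [← union_sdiff_cancel hCS, injOn_union disjoint_sdiff_right]
    exact ⟨hinj, h.injOn, fun i hi j hj hij => (h.mapsTo hj).2 (hij ▸ hmaps hi)⟩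
  rank_apply i hi := by
    by_cases hiC : i ∈ C
    · rw [if_pos hiC, if_pos (hmaps hiC)]
    · rw [if_neg hiC, if_neg (h.mapsTo ⟨hi, hiC⟩).2, h.rank_apply i ⟨hi, hiC⟩]
  weak i hi o ho hio := by
    by_cases hiC : i ∈ C
    · exact hweak i hiC o ho
    by_cases hoC : o ∈ C
    · simp only [if_neg hiC, if_pos hoC, Nat.le_zero_eq, Nat.add_eq_zero_iff, one_ne_zero,
        and_false] at hio
    · simp only [if_neg hiC, if_neg hoC, Nat.add_le_add_iff_right] at hio
      exact h.weak i ⟨hi, hiC⟩ o ⟨ho, hoC⟩ hio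

namespace IsLayered

theorem injective [LE ι] {P : N → SPref N} {x : N → N} {r : N → ι} (h : IsLayered P x r) :
    Injective x :=
  injOn_univ.1 h.injOn

theorem update_demote [DecidableEq N] [LE ι] {P : N → SPref N} {x : N → N} {r : N → ι}
    (h : IsLayered P x r) {i : N} {T : Set N} (hi : x i ∉ T) :
    IsLayered (update P i ((P i).demote T)) x r where
  mapsTo := h.mapsTo
  injOn := h.injOn
  rank_apply := h.rank_apply
  weak j hj o ho hjo := by
    have hweak := h.weak j hj o ho hjo
    obtain rfl | hji := eq_or_ne j i
    · simpa only [update_self] using hweak.demote hi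
    · rwa [update_of_ne hji]

variable [Finite N] [LinearOrder ι] {P : N → SPref N} {x y : N → N} {r : N → ι}

theorem weak_of_eq_of_rank_lt (h : IsLayered P x r) (hy : Injective y) {i : N}
    (hyx : ∀ j, r j < r i → y j = x j) : (P i).weak (x i) (y i) := by
  have hmaps : MapsTo y {j | r j < r i} {j | r j < r i} := fun j hj => by
    rw [mem_ofPred_eq, hyx j hj, h.rank_apply j trivial]
    exact hj
  have hle : r i ≤ r (y i) := not_lt.1 fun hlt =>
    lt_irrefl (r i) ((apply_mem_iff_of_mapsTo hy (toFinite _) hmaps).1 hlt)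
  exact h.weak i trivial (y i) trivial hle

theorem eq_of_forall_weak (h : IsLayered P x r) (hy : Injective y)
    (hyx : ∀ i, (P i).weak (y i) (x i)) : y = x :=
  funext <| induction_on_rank r fun i ih => (hyx i).antisymm (h.weak_of_eq_of_rank_lt hy ih)

theorem apply_eq_of_eq_of_rank_le {ι' : Type*} [LinearOrder ι'] {P' : N → SPref N} {r' : N → ι'}
    (h : IsLayered P x r) (h' : IsLayered P' y r') (i : N) (hP : ∀ j, r j ≤ r i → P j = P' j) :
    y i = x i := by
  induction i using induction_on_rank (fun i => toLex (r i, r' i)) with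
  | step i ih =>
    simp only [Prod.Lex.toLex_lt_toLex] at ih
    have hearlier : ∀ j, r j < r i → y j = x j := fun j hj =>
      ih j (Or.inl hj) fun l hl => hP l (hl.trans hj.le)
    let L : Set N := {j | r j = r i ∧ r' j < r' i}
    have hsame : ∀ j ∈ L, y j = x j := fun j hj =>
      ih j (Or.inr hj) fun l hl => hP l (hl.trans hj.1.le)
    have hmaps : MapsTo x L L := fun j hj =>
      ⟨(h.rank_apply j trivial).trans hj.1,
        (hsame j hj ▸ h'.rank_apply j trivial : r' (x j) = r' j).trans_lt hj.2⟩
    have hle : r' i ≤ r' (x i) := not_lt.1 fun hlt =>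
      lt_irrefl (r' i) ((apply_mem_iff_of_mapsTo h.injective (toFinite L) hmaps).1
        ⟨h.rank_apply i trivial, hlt⟩).2
    have hyx : (P i).weak (y i) (x i) := hP i le_rfl ▸ h'.weak i trivial (x i) trivial hle
    exact hyx.antisymm (h.weak_of_eq_of_rank_lt h'.injective hearlier)

theorem exists_pareto_improvement (h : IsLayered P x r) (hy : Injective y) (hne : y ≠ x)
    (hown : ∀ i, (P i).strict (x i) (y i) → y i = i) :
    ∃ ν : N → N, Bijective ν ∧ (∀ i, (P i).weak (ν i) (y i)) ∧ ∃ j, (P j).strict (ν j) (y j) := by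
  obtain ⟨i, hi : y i ≠ x i, hmin⟩ :=
    exists_min_image {i | y i ≠ x i} r (toFinite _) (ne_iff.1 hne)
  have hearlier : ∀ j, r j < r i → y j = x j := fun j hj =>
    not_not.1 fun hyj => (hmin j hyj).not_gt hj
  have hweak : ∀ j, r j = r i → (P j).weak (x j) (y j) := fun j hj =>
    h.weak_of_eq_of_rank_lt hy (hj.symm ▸ hearlier)
  have hkeep : ∀ j, r j = r i → y j ≠ x j → y j = j := fun j hj hyj =>
    hown j ((hweak j hj).strict_of_ne hyj.symm)
  let D : Set N := {j | r j = r i ∧ y j = j}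
  have hxD : ∀ {j}, x j ∈ D → j ∈ D := fun {j} hj => by
    have hrj : r j = r i := (h.rank_apply j trivial).symm.trans hj.1
    refine ⟨hrj, ?_⟩
    by_cases hyx : y j = x j
    · exact hyx.trans (hy (hj.2.trans hyx.symm))
    · exact hkeep j hrj hyx
  have hDx : ∀ {j}, j ∈ D → x j ∈ D := fun {j} hj => by
    have hiff : x j ∈ Dᶜ ↔ j ∈ Dᶜ :=
      apply_mem_iff_of_mapsTo h.injective (toFinite _) fun _ => mt hxD
    exact not_not.1 (mt hiff.1 (not_not.2 hj))
  refine ⟨D.piecewise x y, Finite.injective_iff_bijective.1 ?_, fun j => ?_, i, ?_⟩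
  · refine (injective_piecewise_iff D).2
      ⟨h.injective.injOn, hy.injOn, fun j hj l hl heq => hl ?_⟩
    have hyl : y l ∈ D := heq ▸ hDx hj
    exact hy hyl.2 ▸ hyl
  · by_cases hj : j ∈ D
    · rw [piecewise_eq_of_mem _ _ _ hj]
      exact hweak j hj.1
    · exact Or.inr (piecewise_eq_of_notMem _ _ _ hj)
  · rw [piecewise_eq_of_mem _ _ _ (show i ∈ D from ⟨rfl, hkeep i rfl hi⟩)]
    exact (hweak i rfl).strict_of_ne hi.symm

end IsLayered

theorem IsLayered.eq_of_pe1_ir1_tp1 [Finite N] [DecidableEq N] [LinearOrder ι]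
    {φ : (N → SPref N) → N → N} (hinj : ∀ P, Injective (φ P)) (hPE : PE1 φ) (hIR : IR1 φ)
    (hTP : TP1 φ) {P : N → SPref N} {x : N → N} {r : N → ι} (h : IsLayered P x r) : φ P = x := by
  obtain ⟨_⟩ := nonempty_fintype N
  induction hn : numAcceptable P using Nat.strong_induction_on generalizing P with
  | _ n ih =>
    subst hn
    have hown : ∀ i, (P i).strict (x i) (φ P i) → φ P i = i := by
      intro i hi
      by_contra hne
      let T := (P i).tail i (φ P i)
      have hlt : numAcceptable (update P i ((P i).demote T)) < numAcceptable P :=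
        numAcceptable_update_demote_lt (fun hT => hT.1 rfl) ⟨hne, Or.inr rfl⟩ (hIR P i)
      have htrunc : φ (update P i ((P i).demote T)) = x :=
        ih _ hlt (h.update_demote fun hT => hT.2.not_strict hi) rfl
      have hweak := hTP P i _ ((P i).trunc1_demote_tail i (φ P i))
      exact (htrunc ▸ hweak).not_strict hi
    by_contra hne
    obtain ⟨ν, hν, himprove⟩ := h.exists_pareto_improvement (hinj P) hne hown
    exact hPE P ν hν himprove

end Layered

section TTC

variable [Nonempty N]

theorem sbest_spec (p : SPref N) {S : Finset N} (hS : S.Nonempty) :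
    sbest p S ∈ S ∧ ∀ o ∈ S, p.weak (sbest p S) o := by
  have hex : ∃ u ∈ S, ∀ o ∈ S, p.weak u o :=
    letI := p.toLinearOrder
    S.exists_min_image id hS
  rw [sbest, dif_pos hex]
  exact hex.choose_spec

/-- The agents on the trading cycles of the market with the objects `S`. -/
noncomputable def cycleAgents (P : N → SPref N) (S : Finset N) : Finset N :=
  S.filter fun o => o ∈ periodicPts fun i => sbest (P i) S

theorem cycleAgents_nonempty (P : N → SPref N) {S : Finset N} (hS : S.Nonempty) :
    (cycleAgents P S).Nonempty := by
  obtain ⟨i, hi, hper⟩ := exists_mem_periodicPts_of_mapsTo (f := fun i => sbest (P i) S)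
    S.finite_toSet hS fun i _ => (sbest_spec (P i) hS).1
  exact ⟨i, Finset.mem_filter.2 ⟨hi, hper⟩⟩

theorem bijOn_cycleAgents (P : N → SPref N) {S : Finset N} (hS : S.Nonempty) :
    BijOn (fun i => sbest (P i) S) (cycleAgents P S) (cycleAgents P S) := by
  have hinter : (cycleAgents P S : Set N) = ↑S ∩ periodicPts fun i => sbest (P i) S := by
    ext i
    exact Finset.mem_filter
  have hmaps : MapsTo (fun i => sbest (P i) S) S S := fun i _ => (sbest_spec (P i) hS).1
  have hper := bijOn_periodicPts fun i => sbest (P i) S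
  rw [hinter, ← Finite.injOn_iff_bijOn_of_mapsTo (toFinite _) (hmaps.inter_inter hper.mapsTo)]
  exact hper.injOn.mono inter_subset_right

variable [DecidableEq N]

theorem TTC1aux_succ (P : N → SPref N) (fuel : ℕ) (S : Finset N) (i : N) :
    TTC1aux P (fuel + 1) S i =
      if i ∈ cycleAgents P S then sbest (P i) S else TTC1aux P fuel (S \ cycleAgents P S) i :=
  rfl

theorem exists_isLayeredOn_TTC1aux (P : N → SPref N) {fuel : ℕ} {S : Finset N}
    (hS : S.card ≤ fuel) : ∃ r : N → ℕ, IsLayeredOn P S (TTC1aux P fuel S) r := by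
  induction fuel generalizing S with
  | zero =>
    obtain rfl : S = ∅ := Finset.card_eq_zero.1 (Nat.le_zero.1 hS)
    exact ⟨0, by simp [MapsTo], by simp, by simp, by simp⟩
  | succ fuel ih =>
    obtain rfl | hne := S.eq_empty_or_nonempty
    · exact ⟨0, by simp [MapsTo], by simp, by simp, by simp⟩
    let C := cycleAgents P S
    have hCS : C ⊆ S := Finset.filter_subset _ _
    have hcard : (S \ C).card ≤ fuel := by
      have := Finset.card_sdiff_add_card_eq_card hCS
      have : 0 < C.card := (cycleAgents_nonempty P hne).card_pos
      omega
    have hin : EqOn (fun i => sbest (P i) S) (TTC1aux P (fuel + 1) S) C := fun i hi => by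
      rw [TTC1aux_succ, if_pos (Finset.mem_coe.1 hi)]
    have hout : EqOn (TTC1aux P fuel (S \ C)) (TTC1aux P (fuel + 1) S) (S \ C : Set N) :=
      fun i hi => by rw [TTC1aux_succ, if_neg (mt Finset.mem_coe.2 hi.2)]
    have hbij : BijOn (TTC1aux P (fuel + 1) S) C C := (bijOn_cycleAgents P hne).congr hin
    obtain ⟨r, hr⟩ := ih hcard
    rw [Finset.coe_sdiff] at hr
    refine ⟨_, (hr.congr hout).of_sdiff hCS hbij.mapsTo hbij.injOn fun i hi o ho => ?_⟩
    rw [← hin hi]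
    exact (sbest_spec (P i) hne).2 o ho

variable [Fintype N]

theorem exists_isLayered_TTC1 (P : N → SPref N) : ∃ r : N → ℕ, IsLayered P (TTC1 P) r := by
  have hcard : (Finset.univ : Finset N).card ≤ Fintype.card N + 1 := Nat.le_succ _
  obtain ⟨r, h⟩ := exists_isLayeredOn_TTC1aux P hcard
  rw [Finset.coe_univ] at h
  exact ⟨r, h⟩

theorem pe1_TTC1 : PE1 (TTC1 (N := N)) := by
  rintro P ν hν ⟨hweak, j, hj⟩
  obtain ⟨r, h⟩ := exists_isLayered_TTC1 P
  rw [h.eq_of_forall_weak hν.injective hweak] at hj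
  exact (P j).irrefl _ hj

theorem ir1_TTC1 : IR1 (TTC1 (N := N)) := by
  intro P i
  obtain ⟨r, h⟩ := exists_isLayered_TTC1 P
  exact h.weak i trivial i trivial le_rfl

theorem weak_TTC1_update (P : N → SPref N) (i : N) (p : SPref N) :
    (P i).weak (TTC1 P i) (TTC1 (update P i p) i) := by
  obtain ⟨r, h⟩ := exists_isLayered_TTC1 P
  obtain ⟨r', h'⟩ := exists_isLayered_TTC1 (update P i p)
  refine h.weak_of_eq_of_rank_lt h'.injective fun j hj => ?_
  refine h.apply_eq_of_eq_of_rank_le h' j fun l hl => ?_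
  have hne : l ≠ i := by
    rintro rfl
    exact hl.not_gt hj
  rw [update_of_ne hne]

theorem tp1_TTC1 : TP1 (TTC1 (N := N)) :=
  fun P i p _ => weak_TTC1_update P i p

end TTC

/-- In the single-object (Shapley–Scarf housing market) environment, a rule
satisfies PE, IR and TP iff it equals the Top Trading Cycles rule. -/
theorem stmt14 {N : Type} [Fintype N] [Nonempty N] [DecidableEq N]
    (hN : 2 ≤ Fintype.card N)
    (φ : (N → SPref N) → N → N) (hb : ∀ P, Function.Bijective (φ P)) :
    (PE1 φ ∧ IR1 φ ∧ TP1 φ) ↔ ∀ P : N → SPref N, ∀ i : N, φ P i = TTC1 P i := by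
  constructor
  · rintro ⟨hPE, hIR, hTP⟩ P i
    obtain ⟨r, h⟩ := exists_isLayered_TTC1 P
    exact congrFun (h.eq_of_pe1_ir1_tp1 (fun P => (hb P).injective) hPE hIR hTP) i
  · intro h
    obtain rfl : φ = TTC1 := funext fun P => funext (h P)
    exact ⟨pe1_TTC1, ir1_TTC1, tp1_TTC1⟩

end Housing
end
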